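/- arXiv:1309.2513 — 5 statements merged into one kernel-verified Lean document; each statement's English description precedes it below -/
import Mathlib

section
/- Suppose (H⁺, H⁻) is a dual pair of graded connected Hopf algebras over a commutative ring k. Let W ⊆ H⁺ be a k-submodule such that a·w ∈ W for all a ∈ H⁺ and w ∈ W, and ρ*_x(W) ⊆ W for all x ∈ H⁻. Then W = I·H⁺ (the k-submodule of H⁺ spanned by all elements c·a with c ∈ I and a ∈ H⁺), where I = {c ∈ k : c·1_{H⁺} ∈ W} is an ideal of k. -/
open scoped TensorProduct

/-- A Hopf pairing between bialgebras `Hm` (= `H⁻`) and `Hp` (= `H⁺`) over a commutative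
ring `k`: a bilinear map `p : Hm →ₗ Hp →ₗ k` satisfying
`⟨xy, a⟩ = Σ_{(a)} ⟨x, a₍₁₎⟩⟨y, a₍₂₎⟩`, `⟨x, ab⟩ = Σ_{(x)} ⟨x₍₁₎, a⟩⟨x₍₂₎, b⟩`,
`⟨1, a⟩ = ε(a)` and `⟨x, 1⟩ = ε(x)`. -/
structure IsHopfPairing (k : Type*) [CommRing k] (Hm Hp : Type*) [Ring Hm] [Ring Hp]
    [Bialgebra k Hm] [Bialgebra k Hp]
    (p : Hm →ₗ[k] Hp →ₗ[k] k) : Prop where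
  mul_left : ∀ (x y : Hm) (a : Hp), p (x * y) a =
    TensorProduct.lift ((LinearMap.mul k k).compl₁₂ (p x) (p y)) (Coalgebra.comul (R := k) a)
  mul_right : ∀ (x : Hm) (a b : Hp), p x (a * b) =
    TensorProduct.lift ((LinearMap.mul k k).compl₁₂ (p.flip a) (p.flip b))
      (Coalgebra.comul (R := k) x)
  one_left : ∀ a : Hp, p 1 a = Coalgebra.counit (R := k) a
  one_right : ∀ x : Hm, p x 1 = Coalgebra.counit (R := k) x

/-- The left-regular action operator `ρ*_x : H⁺ → H⁺`, `ρ*_x(a) = Σ_{(a)} ⟨x, a₍₂₎⟩ a₍₁₎`. -/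
noncomputable def rhoStar {k : Type*} [CommRing k] {Hm Hp : Type*} [Ring Hm] [Ring Hp]
    [Bialgebra k Hm] [Bialgebra k Hp]
    (p : Hm →ₗ[k] Hp →ₗ[k] k) (x : Hm) : Hp →ₗ[k] Hp :=
  (TensorProduct.lift (((LinearMap.lsmul k Hp).comp (p x)).flip)).comp
    (Coalgebra.comul (R := k))


/-- A graded connected Hopf algebra structure on a Hopf algebra `H` over `k`: a direct sum
decomposition `H = ⊕ₙ Hₙ` into finitely generated free `k`-submodules with
`Hⱼ·Hₗ ⊆ H_{j+ℓ}`, `Δ(Hₙ) ⊆ ⊕_{j=0}^n Hⱼ ⊗ H_{n−j}`, `H₀ = k·1` and `ε(Hₙ) = 0` for `n > 0`. -/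
structure GradedConnected (k : Type*) [CommRing k] (H : Type*) [Ring H] [HopfAlgebra k H]
    (ℬ : ℕ → Submodule k H) : Prop where
  internal : DirectSum.IsInternal ℬ
  fg : ∀ n, (ℬ n).FG
  free : ∀ n, Module.Free k (ℬ n)
  mul_mem : ∀ {m n : ℕ} {a b : H}, a ∈ ℬ m → b ∈ ℬ n → a * b ∈ ℬ (m + n)
  comul_mem : ∀ (n : ℕ), ∀ a ∈ ℬ n, Coalgebra.comul (R := k) a ∈
    ⨆ j ∈ Finset.range (n + 1),
      LinearMap.range (TensorProduct.map (ℬ j).subtype (ℬ (n - j)).subtype)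
  zero_eq : ℬ 0 = 1
  counit_eq_zero : ∀ n, 0 < n → ∀ a ∈ ℬ n, Coalgebra.counit (R := k) a = 0

/-- A dual pair `(H⁺, H⁻)` of graded connected Hopf algebras: a Hopf pairing
`⟨·,·⟩ : H⁻ × H⁺ → k` such that `⟨H⁻ₘ, H⁺ₙ⟩ = 0` for `m ≠ n` and the restriction of the
pairing to `H⁻ₙ × H⁺ₙ` is a perfect pairing for every `n`. -/
structure IsDualPair (k : Type*) [CommRing k] (Hm Hp : Type*) [Ring Hm] [Ring Hp]
    [HopfAlgebra k Hm] [HopfAlgebra k Hp]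
    (ℬm : ℕ → Submodule k Hm) (ℬp : ℕ → Submodule k Hp)
    (p : Hm →ₗ[k] Hp →ₗ[k] k) : Prop where
  gradedM : GradedConnected k Hm ℬm
  gradedP : GradedConnected k Hp ℬp
  pairing : IsHopfPairing k Hm Hp p
  orth : ∀ {m n : ℕ}, m ≠ n → ∀ x ∈ ℬm m, ∀ a ∈ ℬp n, p x a = 0
  perfect : ∀ n, Function.Bijective ((p.domRestrict (ℬm n)).compl₂ (ℬp n).subtype)

/-!
If `f` vanishes on `H⁺ₘ` for all `m < n` and `w` has degree at most `n`, then in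
`∑ f(w₍₂₎) w₍₁₎` only the terms with `w₍₁₎` of degree `0` survive, so the sum is the scalar
`f(w) · 1`; when `w ∈ W` and `W` is stable under this contraction, `f(w) ∈ I`. By perfectness such
`f` restrict to arbitrary functionals on the projective module `H⁺ₙ`, so the top component of `w`
lies in `I · H⁺ ⊆ W` and can be subtracted: induct on the degree.
-/

section Coalgebra

variable {R C : Type*} [CommSemiring R] [AddCommMonoid C] [Module R C] [Coalgebra R C]

/-- The contraction `a ↦ ∑ f(a₍₂₎) a₍₁₎`, that is, the action on a coalgebra of the functional `f`
in its dual algebra. It is `ρ*_x` when `f = ⟨x, ·⟩`. -/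
noncomputable def contractSnd (f : Module.Dual R C) : C →ₗ[R] C :=
  (TensorProduct.rid R C).toLinearMap ∘ₗ f.lTensor C ∘ₗ Coalgebra.comul

/-- The comultiplication respects the degrees of the family `𝒞`: `Δ(𝒞ₙ) ⊆ ∑ⱼ 𝒞ⱼ ⊗ 𝒞ₙ₋ⱼ`. The
family need not be a direct sum decomposition. -/
def ComulGraded (𝒞 : ℕ → Submodule R C) : Prop :=
  ∀ n, ∀ a ∈ 𝒞 n, Coalgebra.comul (R := R) a ∈
    ⨆ j ∈ Finset.range (n + 1),
      LinearMap.range (TensorProduct.map (𝒞 j).subtype (𝒞 (n - j)).subtype)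

theorem counit_contractSnd (f : Module.Dual R C) (a : C) :
    Coalgebra.counit (R := R) (contractSnd f a) = f a := by
  have counit_comp_rid_comp_lTensor :
      Coalgebra.counit ∘ₗ (TensorProduct.rid R C).toLinearMap ∘ₗ f.lTensor C =
        f ∘ₗ (TensorProduct.lid R C).toLinearMap ∘ₗ Coalgebra.counit.rTensor C := by
    ext b c
    simp [mul_comm]
  simpa [contractSnd] using
    LinearMap.congr_fun counit_comp_rid_comp_lTensor (Coalgebra.comul (R := R) a)

theorem ComulGraded.contractSnd_mem_zero {𝒞 : ℕ → Submodule R C} (h𝒞 : ComulGraded 𝒞)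
    {f : Module.Dual R C} {n : ℕ} (hf : ∀ m < n, 𝒞 m ≤ LinearMap.ker f) {a : C} (ha : a ∈ 𝒞 n) :
    contractSnd f a ∈ 𝒞 0 := by
  suffices h : (⨆ j ∈ Finset.range (n + 1),
      LinearMap.range (TensorProduct.map (𝒞 j).subtype (𝒞 (n - j)).subtype)) ≤
      (𝒞 0).comap ((TensorProduct.rid R C).toLinearMap ∘ₗ f.lTensor C) from h (h𝒞 n a ha)
  refine iSup₂_le fun j hj => ?_
  rw [LinearMap.range_le_iff_comap, ← top_le_iff, ← TensorProduct.span_tmul_eq_top,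
    Submodule.span_le]
  rintro _ ⟨b, c, rfl⟩
  suffices f c • (b : C) ∈ 𝒞 0 by simpa
  obtain rfl | hj0 := Nat.eq_zero_or_pos j
  · exact (𝒞 0).smul_mem _ b.2
  · have hfc : f c = 0 := hf (n - j) (by grind) c.2
    simp [hfc]

end Coalgebra

section Bialgebra

variable {R A : Type*} [CommSemiring R] [Semiring A] [Bialgebra R A]

theorem contractSnd_eq_algebraMap_of_mem_one {f : Module.Dual R A} {a : A}
    (h : contractSnd f a ∈ (1 : Submodule R A)) : contractSnd f a = algebraMap R A (f a) := by
  obtain ⟨c, hc⟩ := Submodule.mem_one.mp h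
  rw [← counit_contractSnd f a, ← hc, Bialgebra.counit_algebraMap]

theorem ComulGraded.contractSnd_eq_algebraMap {𝒜 : ℕ → Submodule R A} (h𝒜 : ComulGraded 𝒜)
    (h𝒜₀ : 𝒜 0 ≤ 1) {f : Module.Dual R A} {n : ℕ} (hf : ∀ m < n, 𝒜 m ≤ LinearMap.ker f)
    {a : A} (ha : a ∈ partialSups 𝒜 n) : contractSnd f a = algebraMap R A (f a) := by
  suffices h : partialSups 𝒜 n ≤
      LinearMap.eqLocus (contractSnd f) (Algebra.linearMap R A ∘ₗ f) from h ha
  refine partialSups_le _ _ _ fun m hmn b hb => ?_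
  exact contractSnd_eq_algebraMap_of_mem_one <|
    h𝒜₀ (h𝒜.contractSnd_mem_zero (fun j hj => hf j (hj.trans_le hmn)) hb)

end Bialgebra

theorem mem_ideal_smul_top_of_forall_dual_mem {R M : Type*} [CommSemiring R] [AddCommMonoid M]
    [Module R M] [Module.Projective R M] {I : Ideal R} {v : M}
    (h : ∀ φ : Module.Dual R M, φ v ∈ I) : v ∈ I • (⊤ : Submodule R M) := by
  obtain ⟨s, hs⟩ := Module.projective_def'.mp ‹Module.Projective R M›
  have sum_eq : (s v).sum (fun i c => c • i) = v := LinearMap.congr_fun hs v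
  rw [← sum_eq]
  exact Submodule.sum_mem _ fun i _ =>
    Submodule.smul_mem_smul (h (Finsupp.lapply i ∘ₗ s)) Submodule.mem_top

theorem comap_linearMap_smul_top_le {R A : Type*} [CommSemiring R] [Semiring A] [Algebra R A]
    {W : Submodule R A} (hmul : ∀ a : A, ∀ w ∈ W, a * w ∈ W) :
    (W.comap (Algebra.linearMap R A) : Ideal R) • (⊤ : Submodule R A) ≤ W := by
  refine Submodule.smul_le.mpr fun c hc a _ => ?_
  rw [Algebra.smul_def, Algebra.commutes]
  exact hmul a _ hc

section Connected

variable {k A : Type*} [CommRing k] [Ring A] [Bialgebra k A] {𝒜 : ℕ → Submodule k A}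
  [∀ n, Module.Projective k (𝒜 n)] {X : Set (Module.Dual k A)} {W : Submodule k A}

theorem ComulGraded.mem_ideal_smul_top_of_mem_partialSups (h𝒜 : ComulGraded 𝒜) (h𝒜₀ : 𝒜 0 ≤ 1)
    (hX : ∀ n (φ : Module.Dual k (𝒜 n)), ∃ f ∈ X,
      (∀ m < n, 𝒜 m ≤ LinearMap.ker f) ∧ f ∘ₗ (𝒜 n).subtype = φ)
    (hmul : ∀ a : A, ∀ w ∈ W, a * w ∈ W) (hW : ∀ f ∈ X, ∀ w ∈ W, contractSnd f w ∈ W)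
    {n : ℕ} {w : A} (hw : w ∈ W) (hwn : w ∈ partialSups 𝒜 n) :
    w ∈ (W.comap (Algebra.linearMap k A) : Ideal k) • (⊤ : Submodule k A) := by
  set I : Ideal k := W.comap (Algebra.linearMap k A)
  induction n generalizing w with
  | zero =>
    obtain ⟨c, rfl⟩ := Submodule.mem_one.mp (h𝒜₀ (by simpa using hwn))
    rw [Algebra.algebraMap_eq_smul_one]
    exact Submodule.smul_mem_smul hw Submodule.mem_top
  | succ n ih =>
    obtain ⟨u, hu, v, hv, rfl⟩ := Submodule.mem_sup.mp (partialSups_add_one 𝒜 n ▸ hwn)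
    have dual_mem (φ : Module.Dual k (𝒜 (n + 1))) : φ ⟨v, hv⟩ ∈ I := by
      obtain ⟨f, hfX, hf, rfl⟩ := hX (n + 1) φ
      have hfu : f u = 0 := partialSups_le _ _ _ (fun m hm => hf m (Nat.lt_succ_of_le hm)) hu
      have hfv := hW f hfX _ hw
      rwa [h𝒜.contractSnd_eq_algebraMap h𝒜₀ hf hwn, map_add, hfu, zero_add] at hfv
    have hvI : v ∈ I • (⊤ : Submodule k A) :=
      Submodule.smul_mono le_rfl le_top <| (Submodule.mem_smul_top_iff I _ ⟨v, hv⟩).mp <|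
        mem_ideal_smul_top_of_forall_dual_mem dual_mem
    have huW : u ∈ W := by
      simpa using sub_mem hw (comap_linearMap_smul_top_le hmul hvI)
    exact add_mem (ih huW hu) hvI

theorem submodule_eq_ideal_smul_general (h𝒜 : ComulGraded 𝒜) (h𝒜₀ : 𝒜 0 ≤ 1)
    (h_iSup : ⨆ n, 𝒜 n = ⊤)
    (hX : ∀ n (φ : Module.Dual k (𝒜 n)), ∃ f ∈ X,
      (∀ m < n, 𝒜 m ≤ LinearMap.ker f) ∧ f ∘ₗ (𝒜 n).subtype = φ)
    (hmul : ∀ a : A, ∀ w ∈ W, a * w ∈ W) (hW : ∀ f ∈ X, ∀ w ∈ W, contractSnd f w ∈ W) :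
    W = (W.comap (Algebra.linearMap k A) : Ideal k) • (⊤ : Submodule k A) := by
  refine le_antisymm (fun w hw => ?_) (comap_linearMap_smul_top_le hmul)
  have hw_iSup : w ∈ ⨆ n, partialSups 𝒜 n := by
    rw [iSup_partialSups_eq, h_iSup]
    exact Submodule.mem_top
  obtain ⟨n, hwn⟩ :=
    (Submodule.mem_iSup_of_directed _ (partialSups 𝒜).monotone.directed_le).mp hw_iSup
  exact h𝒜.mem_ideal_smul_top_of_mem_partialSups h𝒜₀ hX hmul hW hw hwn

end Connected

theorem rhoStar_eq_contractSnd {k Hm Hp : Type*} [CommRing k] [Ring Hm] [Ring Hp]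
    [Bialgebra k Hm] [Bialgebra k Hp] (p : Hm →ₗ[k] Hp →ₗ[k] k) (x : Hm) :
    rhoStar p x = contractSnd (p x) := by
  rw [rhoStar, contractSnd, ← LinearMap.comp_assoc]
  congr 1
  ext a b
  simp

/-- in a dual pair over a commutative ring `k`, if `W ⊆ H⁺` is a `k`-submodule
closed under left multiplication by `H⁺` and under all operators `ρ*_x` (`x ∈ H⁻`), then
`W = I·H⁺`, where `I = {c ∈ k : c·1 ∈ W}` (an ideal of `k`, here realized as the comap of
`W` under `c ↦ c·1`). -/
theorem submodule_eq_ideal_smul {k : Type*} [CommRing k] {Hm Hp : Type*} [Ring Hm] [Ring Hp]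
    [HopfAlgebra k Hm] [HopfAlgebra k Hp]
    {ℬm : ℕ → Submodule k Hm} {ℬp : ℕ → Submodule k Hp}
    (p : Hm →ₗ[k] Hp →ₗ[k] k) (hD : IsDualPair k Hm Hp ℬm ℬp p)
    (W : Submodule k Hp)
    (hmul : ∀ (a : Hp), ∀ w ∈ W, a * w ∈ W)
    (hrho : ∀ (x : Hm), ∀ w ∈ W, rhoStar p x w ∈ W) :
    W = (W.comap (Algebra.linearMap k Hp) : Ideal k) • (⊤ : Submodule k Hp) := by
  have := hD.gradedP.free
  refine submodule_eq_ideal_smul_general (X := Set.range p) hD.gradedP.comul_mem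
    hD.gradedP.zero_eq.le hD.gradedP.internal.submodule_iSup_eq_top (fun n φ => ?_) hmul ?_
  · obtain ⟨x, hx⟩ := (hD.perfect n).surjective φ
    exact ⟨p x, ⟨x, rfl⟩, fun m hm a ha => hD.orth hm.ne' x x.2 a ha, hx⟩
  · rintro _ ⟨x, rfl⟩ w hw
    exact rhoStar_eq_contractSnd p x ▸ hrho x w hw
end

section
/- Suppose (H⁺, H⁻) is a dual pair of graded connected Hopf algebras over a field k, and let X⁺ ⊆ H⁺ be a k-subalgebra such that ρ*_x(X⁺) ⊆ X⁺ for all x ∈ H⁻. Then the only k-subspaces W ⊆ X⁺ satisfying a·w ∈ W for all a ∈ X⁺, w ∈ W and ρ*_x(W) ⊆ W for all x ∈ H⁻ are W = {0} and W = X⁺; that is, the Fock space X⁺ is irreducible as a module over the algebra X⁺ # H⁻. -/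
open scoped TensorProduct

/-!
A nonzero `w ∈ W` has a nonzero component `w_n` of top degree, and perfectness of the pairing gives
`x ∈ H⁻_n` with `⟨x, w_n⟩ ≠ 0`. Since `ρ*_x` lowers degrees by `n`, it sends `w` into `H⁺_0 = k·1`,
and `ε(ρ*_x(w)) = ⟨x, w⟩` identifies the image as `⟨x, w_n⟩ · 1`. Hence `1 ∈ W`, and so
`X⁺ = X⁺ · 1 ⊆ W`.
-/

section Decomposition

variable {ι R M : Type*} [Semiring R] [AddCommMonoid M] [Module R M] (ℬ : ι → Submodule R M)

theorem exists_top_decompose_ne_zero [LinearOrder ι] [DirectSum.Decomposition ℬ] {w : M}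
    (hw : w ≠ 0) :
    ∃ n, DirectSum.decompose ℬ w n ≠ 0 ∧ ∀ i, n < i → DirectSum.decompose ℬ w i = 0 := by
  classical
  have hne : (DirectSum.decompose ℬ w).support.Nonempty := by
    rw [Finset.nonempty_iff_ne_empty, Ne, DFinsupp.support_eq_empty]
    exact fun h => hw <| (DirectSum.decompose ℬ).injective <|
      h.trans (DirectSum.decompose_zero ℬ).symm
  refine ⟨_, DFinsupp.mem_support_iff.1 (Finset.max'_mem _ hne), fun i hi => ?_⟩
  by_contra h
  exact hi.not_ge (Finset.le_max' _ i (DFinsupp.mem_support_iff.2 h))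

theorem map_eq_map_decompose [DecidableEq ι] [DirectSum.Decomposition ℬ] {N : Type*}
    [AddCommMonoid N] [Module R N] {f : M →ₗ[R] N} {n : ι}
    (hf : ∀ i, i ≠ n → ℬ i ≤ LinearMap.ker f) (w : M) :
    f w = f (DirectSum.decompose ℬ w n) := by
  classical
  conv_lhs => rw [← DirectSum.sum_support_decompose ℬ w, map_sum]
  refine Finset.sum_eq_single n (fun i _ hi => hf i hi (SetLike.coe_mem _)) fun hn => ?_
  rw [DFinsupp.notMem_support_iff.1 hn, ZeroMemClass.coe_zero, map_zero]

end Decomposition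

/-- The degree `n` part `Σ_{j ≤ n} ℬ j ⊗ ℬ (n - j)` of the tensor square of a graded module, as a
submodule of `M ⊗ M`; a coproduct is graded when it maps `ℬ n` into it. -/
def tensorSquareDegree {R M : Type*} [CommSemiring R] [AddCommMonoid M] [Module R M]
    (ℬ : ℕ → Submodule R M) (n : ℕ) : Submodule R (M ⊗[R] M) :=
  ⨆ j ∈ Finset.range (n + 1),
    LinearMap.range (TensorProduct.map (ℬ j).subtype (ℬ (n - j)).subtype)

section RhoStar

variable {k : Type*} [CommRing k] {Hm Hp : Type*} [Ring Hm] [Ring Hp]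
  [Bialgebra k Hm] [Bialgebra k Hp] (p : Hm →ₗ[k] Hp →ₗ[k] k) (x : Hm)

theorem rhoStar_eq_sum {a : Hp} {ι : Type*} (𝓡 : Coalgebra.Repr k a ι) :
    rhoStar p x a = ∑ i ∈ 𝓡.index, p x (𝓡.right i) • 𝓡.left i := by
  simp [rhoStar, ← 𝓡.eq]

theorem counit_rhoStar (a : Hp) : Coalgebra.counit (R := k) (rhoStar p x a) = p x a := by
  let 𝓡 := Coalgebra.Repr.arbitrary k a
  calc Coalgebra.counit (R := k) (rhoStar p x a)
      = p x (∑ i ∈ 𝓡.index, Coalgebra.counit (R := k) (𝓡.left i) • 𝓡.right i) := by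
        simp [rhoStar_eq_sum p x 𝓡, mul_comm]
    _ = p x a := by rw [Coalgebra.sum_counit_smul]

variable {p x} {a : Hp} {ℬ : ℕ → Submodule k Hp}

theorem rhoStar_eq_smul_one_of_mem_one (h : rhoStar p x a ∈ (1 : Submodule k Hp)) :
    rhoStar p x a = p x a • 1 := by
  obtain ⟨c, hc⟩ := Submodule.mem_one.1 h
  have hca : c = p x a := by
    rw [← counit_rhoStar, ← hc, Bialgebra.counit_algebraMap]
  rw [← hc, hca, Algebra.algebraMap_eq_smul_one]

-- For `i < m` the subtraction truncates; there `ρ*_x(a) = 0`, so the statement still holds.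
theorem rhoStar_mem_sub {m i : ℕ} (hx : ∀ l, l ≠ m → ℬ l ≤ LinearMap.ker (p x))
    (ha : Coalgebra.comul (R := k) a ∈ tensorSquareDegree ℬ i) :
    rhoStar p x a ∈ ℬ (i - m) := by
  suffices h : tensorSquareDegree ℬ i ≤ (ℬ (i - m)).comap
      (TensorProduct.lift (((LinearMap.lsmul k Hp).comp (p x)).flip)) from h ha
  refine iSup₂_le fun j hj => ?_
  rw [← TensorProduct.mapIncl, TensorProduct.range_mapIncl, Submodule.map₂_le]
  intro u hu v hv
  have huv : p x v • u ∈ ℬ (i - m) := by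
    obtain hm | hm := eq_or_ne (i - j) m
    · have hjm : j = i - m := by
        have := Finset.mem_range.1 hj
        omega
      exact Submodule.smul_mem _ _ (hjm ▸ hu)
    · rw [LinearMap.mem_ker.1 (hx _ hm hv), zero_smul]
      exact zero_mem _
  simpa using huv

theorem rhoStar_eq_smul_one [DirectSum.Decomposition ℬ]
    (hΔ : ∀ n, ∀ a ∈ ℬ n, Coalgebra.comul (R := k) a ∈ tensorSquareDegree ℬ n)
    (hzero : ℬ 0 = 1) {n : ℕ} (hx : ∀ l, l ≠ n → ℬ l ≤ LinearMap.ker (p x))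
    (ha : ∀ i, n < i → DirectSum.decompose ℬ a i = 0) :
    rhoStar p x a = p x a • 1 := by
  classical
  refine rhoStar_eq_smul_one_of_mem_one ?_
  rw [← hzero, ← DirectSum.sum_support_decompose ℬ a, map_sum]
  refine Submodule.sum_mem _ fun i hi => ?_
  have hin : i ≤ n := not_lt.1 fun h => DFinsupp.mem_support_iff.1 hi (ha i h)
  have hmem := rhoStar_mem_sub hx (hΔ i _ (DirectSum.decompose ℬ a i).2)
  rwa [Nat.sub_eq_zero_of_le hin] at hmem

end RhoStar

theorem separatingRight_of_surjective {R M N : Type*} [CommSemiring R] [AddCommMonoid M]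
    [Module R M] [AddCommMonoid N] [Module R N] [Module.Projective R N] {B : M →ₗ[R] N →ₗ[R] R}
    (hB : Function.Surjective B) : B.SeparatingRight := fun y hy =>
  (Module.forall_dual_apply_eq_zero_iff R y).1 (hB.forall.2 hy)

theorem IsDualPair.separatingRight {k : Type*} [CommRing k] {Hm Hp : Type*} [Ring Hm] [Ring Hp]
    [HopfAlgebra k Hm] [HopfAlgebra k Hp] {ℬm : ℕ → Submodule k Hm} {ℬp : ℕ → Submodule k Hp}
    {p : Hm →ₗ[k] Hp →ₗ[k] k} (hD : IsDualPair k Hm Hp ℬm ℬp p) (n : ℕ) :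
    (p.domRestrict₁₂ (ℬm n) (ℬp n)).SeparatingRight :=
  have := hD.gradedP.free n
  separatingRight_of_surjective (hD.perfect n).surjective

section Irreducibility

variable {k : Type*} [Field k] {Hm Hp : Type*} [Ring Hm] [Ring Hp]
  [Bialgebra k Hm] [Bialgebra k Hp] {ℬm : ℕ → Submodule k Hm} {ℬp : ℕ → Submodule k Hp}

theorem one_mem_of_rhoStar_mem (p : Hm →ₗ[k] Hp →ₗ[k] k) (hinternal : DirectSum.IsInternal ℬp)
    (hΔ : ∀ n, ∀ a ∈ ℬp n, Coalgebra.comul (R := k) a ∈ tensorSquareDegree ℬp n)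
    (hzero : ℬp 0 = 1) (horth : ∀ {m n : ℕ}, m ≠ n → ∀ x ∈ ℬm m, ∀ a ∈ ℬp n, p x a = 0)
    (hsep : ∀ n, (p.domRestrict₁₂ (ℬm n) (ℬp n)).SeparatingRight)
    {W : Submodule k Hp} (hrho : ∀ (x : Hm), ∀ w ∈ W, rhoStar p x w ∈ W) (hW : W ≠ ⊥) :
    (1 : Hp) ∈ W := by
  let := hinternal.chooseDecomposition
  obtain ⟨w, hwW, hw⟩ := W.ne_bot_iff.1 hW
  obtain ⟨n, hwn, htop⟩ := exists_top_decompose_ne_zero ℬp hw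
  obtain ⟨x, hxn⟩ : ∃ x : ℬm n, p x (DirectSum.decompose ℬp w n) ≠ 0 := by
    contrapose! hwn
    exact hsep n _ hwn
  have hx : ∀ l, l ≠ n → ℬp l ≤ LinearMap.ker (p x) := fun l hl => horth hl.symm x x.2
  have hpw : p x w ≠ 0 := by rwa [map_eq_map_decompose ℬp hx]
  have hmem := hrho x w hwW
  rw [rhoStar_eq_smul_one hΔ hzero hx htop] at hmem
  exact (W.smul_mem_iff hpw).1 hmem

theorem fockSpace_irreducible_general (p : Hm →ₗ[k] Hp →ₗ[k] k)
    (hinternal : DirectSum.IsInternal ℬp)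
    (hΔ : ∀ n, ∀ a ∈ ℬp n, Coalgebra.comul (R := k) a ∈ tensorSquareDegree ℬp n)
    (hzero : ℬp 0 = 1) (horth : ∀ {m n : ℕ}, m ≠ n → ∀ x ∈ ℬm m, ∀ a ∈ ℬp n, p x a = 0)
    (hsep : ∀ n, (p.domRestrict₁₂ (ℬm n) (ℬp n)).SeparatingRight)
    {X W : Submodule k Hp} (hWX : W ≤ X) (hmul : ∀ a ∈ X, ∀ w ∈ W, a * w ∈ W)
    (hrho : ∀ (x : Hm), ∀ w ∈ W, rhoStar p x w ∈ W) :
    W = ⊥ ∨ W = X := by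
  refine or_iff_not_imp_left.2 fun hW => le_antisymm hWX fun a ha => ?_
  have hone := one_mem_of_rhoStar_mem p hinternal hΔ hzero horth hsep hrho hW
  simpa only [mul_one] using hmul a ha 1 hone

end Irreducibility

/-- in a dual pair over a field `k`, if `X⁺ ⊆ H⁺` is a subalgebra invariant
under all `ρ*_x`, then the only subspaces `W ⊆ X⁺` closed under left multiplication by `X⁺`
and under all `ρ*_x` are `{0}` and `X⁺`: the Fock space `X⁺` is an irreducible
`X⁺ # H⁻`-module. -/
theorem fockSpace_irreducible {k : Type*} [Field k] {Hm Hp : Type*} [Ring Hm] [Ring Hp]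
    [HopfAlgebra k Hm] [HopfAlgebra k Hp]
    {ℬm : ℕ → Submodule k Hm} {ℬp : ℕ → Submodule k Hp}
    (p : Hm →ₗ[k] Hp →ₗ[k] k) (hD : IsDualPair k Hm Hp ℬm ℬp p)
    (X : Subalgebra k Hp)
    (hX : ∀ (x : Hm), ∀ a ∈ X, rhoStar p x a ∈ X)
    (W : Submodule k Hp) (hWX : W ≤ Subalgebra.toSubmodule X)
    (hmul : ∀ a ∈ X, ∀ w ∈ W, a * w ∈ W)
    (hrho : ∀ (x : Hm), ∀ w ∈ W, rhoStar p x w ∈ W) :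
    W = ⊥ ∨ W = Subalgebra.toSubmodule X :=
  fockSpace_irreducible_general p hD.gradedP.internal hD.gradedP.comul_mem hD.gradedP.zero_eq
    hD.orth hD.separatingRight hWX hmul hrho
end

section
/- (Generalized Stone–von Neumann theorem.) Suppose (H⁺, H⁻) is a dual pair of graded connected Hopf algebras over k. Let V be a k-module equipped with k-algebra homomorphisms π : H⁺ → End_k(V) and τ : H⁻ → End_k(V) satisfying the Heisenberg-double relation τ(x) ∘ π(a) = Σ_{(x)} π(ρ*_{x_(1)}(a)) ∘ τ(x_(2)) for all x ∈ H⁻ and a ∈ H⁺. Suppose v₀ ∈ V is a lowest weight vacuum vector, i.e.: τ(x)·v₀ = ε(x)·v₀ for all x ∈ H⁻; the map k → V, c ↦ c·v₀, is injective; and V is spanned over k by {π(a)·v₀ : a ∈ H⁺}. Then the map H⁺ → V, a ↦ π(a)·v₀, is a k-module isomorphism. -/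
open scoped TensorProduct

/-!
By the Heisenberg relation and the vacuum condition, `a ↦ π(a)v₀` intertwines `ρ*_x` with `τ(x)`,
so its kernel is stable under all `ρ*_x`. A stable submodule meeting degree zero trivially is zero:
if `a` lies in it with top homogeneous component `aₙ`, then for every `x` of degree `n` the element
`ρ*_x(a)` has degree zero, hence vanishes, so that `⟨x, aₙ⟩ = ⟨x, a⟩ = ε(ρ*_x(a)) = 0`, and `aₙ = 0`
because the pairing separates points in degree `n`.
-/

section Contraction

variable {k M C : Type*} [CommSemiring k] [AddCommMonoid M] [Module k M]
  [AddCommMonoid C] [Module k C] [Coalgebra k C]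

/-- The right contraction `x ↦ (a ↦ Σ_{(a)} ⟨x, a₍₂₎⟩ a₍₁₎)` of a coalgebra along a pairing with an
arbitrary module; it extends `rhoStar` to this setting and records its linearity in `x`. -/
noncomputable def rightContraction (p : M →ₗ[k] C →ₗ[k] k) : M →ₗ[k] C →ₗ[k] C :=
  (((LinearMap.lTensorHom C).comp p).compr₂ (TensorProduct.rid k C).toLinearMap).compl₂
    Coalgebra.comul

theorem rightContraction_apply (p : M →ₗ[k] C →ₗ[k] k) (x : M) (a : C) :
    rightContraction p x a =
      TensorProduct.rid k C ((p x).lTensor C (Coalgebra.comul (R := k) a)) :=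
  rfl

theorem rightContraction_eq_sum {ι : Type*} (p : M →ₗ[k] C →ₗ[k] k) (x : M) {a : C}
    (r : Coalgebra.Repr k a ι) :
    rightContraction p x a = ∑ i ∈ r.index, p x (r.right i) • r.left i := by
  simp only [rightContraction_apply, ← r.eq, map_sum, LinearMap.lTensor_tmul,
    TensorProduct.rid_tmul]

theorem counit_rightContraction (p : M →ₗ[k] C →ₗ[k] k) (x : M) (a : C) :
    Coalgebra.counit (R := k) (rightContraction p x a) = p x a := by
  let r := Coalgebra.Repr.arbitrary k a
  calc Coalgebra.counit (R := k) (rightContraction p x a)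
      = ∑ i ∈ r.index, p x (Coalgebra.counit (R := k) (r.left i) • r.right i) := by
        simp only [rightContraction_eq_sum p x r, map_sum, map_smul, smul_eq_mul, mul_comm]
    _ = p x a := by rw [← map_sum, Coalgebra.sum_counit_smul]

end Contraction

theorem rhoStar_eq_rightContraction {k Hm Hp : Type*} [CommRing k] [Ring Hm] [Ring Hp]
    [Bialgebra k Hm] [Bialgebra k Hp] (p : Hm →ₗ[k] Hp →ₗ[k] k) (x : Hm) :
    rhoStar p x = rightContraction p x := by
  have hlift : TensorProduct.lift ((LinearMap.lsmul k Hp).comp (p x)).flip =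
      (TensorProduct.rid k Hp).toLinearMap ∘ₗ (p x).lTensor Hp := by
    ext a b
    simp
  exact congrArg (·.comp Coalgebra.comul) hlift

section GradedPairing

variable {k M C : Type*} [CommSemiring k] [AddCommMonoid M] [Module k M]
  [AddCommMonoid C] [Module k C] [Coalgebra k C]

/-- A graded coalgebra `(C, ℬ)` paired with a family `𝒜` of submodules of a module `M`, so that
`𝒜 n` annihilates all degrees below `n` and separates the points of degree `n`. This is the part of
the notion of a dual pair that controls the invariant submodules of `rightContraction`; the degrees
are only required to span `C`. -/
structure IsGradedSeparatingPairing (𝒜 : ℕ → Submodule k M) (ℬ : ℕ → Submodule k C)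
    (p : M →ₗ[k] C →ₗ[k] k) : Prop where
  iSup_eq_top : ⨆ n, ℬ n = ⊤
  comul_mem : ∀ (n : ℕ), ∀ a ∈ ℬ n, Coalgebra.comul (R := k) a ∈
    ⨆ j ∈ Finset.range (n + 1),
      LinearMap.range (TensorProduct.map (ℬ j).subtype (ℬ (n - j)).subtype)
  apply_eq_zero_of_lt : ∀ {m n : ℕ}, m < n → ∀ x ∈ 𝒜 n, ∀ a ∈ ℬ m, p x a = 0
  separating : ∀ n, ∀ a ∈ ℬ n, (∀ x ∈ 𝒜 n, p x a = 0) → a = 0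

namespace IsGradedSeparatingPairing

variable {𝒜 : ℕ → Submodule k M} {ℬ : ℕ → Submodule k C} {p : M →ₗ[k] C →ₗ[k] k}

theorem rightContraction_mem_zero (h : IsGradedSeparatingPairing 𝒜 ℬ p) {m n : ℕ} (hmn : m ≤ n)
    {x : M} (hx : x ∈ 𝒜 n) {a : C} (ha : a ∈ ℬ m) : rightContraction p x a ∈ ℬ 0 := by
  let contract : C ⊗[k] C →ₗ[k] C := (TensorProduct.rid k C).toLinearMap ∘ₗ (p x).lTensor C
  suffices hle : (⨆ j ∈ Finset.range (m + 1),
      LinearMap.range (TensorProduct.map (ℬ j).subtype (ℬ (m - j)).subtype)) ≤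
      (ℬ 0).comap contract from hle (h.comul_mem m a ha)
  refine iSup₂_le fun j hj => ?_
  rw [TensorProduct.range_map_eq_span_tmul, Submodule.span_le]
  rintro _ ⟨c, b, rfl⟩
  change p x b • (c : C) ∈ ℬ 0
  rcases Nat.eq_zero_or_pos j with rfl | hj_pos
  · exact (ℬ 0).smul_mem _ c.2
  · have hlt : m - j < n := by have := Finset.mem_range.mp hj; omega
    rw [h.apply_eq_zero_of_lt hlt x hx b b.2, zero_smul]
    exact zero_mem _

theorem eq_bot_of_invariant (h : IsGradedSeparatingPairing 𝒜 ℬ p) {N : Submodule k C}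
    (hN : ∀ x, N ≤ N.comap (rightContraction p x)) (hN_zero : Disjoint N (ℬ 0)) : N = ⊥ := by
  refine (Submodule.eq_bot_iff N).mpr fun a ha => by_contra fun ha_ne => ?_
  obtain ⟨f, hf, rfl⟩ := (Submodule.mem_iSup_iff_exists_finsupp ℬ a).mp
    (h.iSup_eq_top ▸ Submodule.mem_top)
  have hsupp : f.support.Nonempty := by
    rw [Finset.nonempty_iff_ne_empty]
    exact fun hempty => ha_ne (by rw [Finsupp.sum, hempty, Finset.sum_empty])
  let n := f.support.max' hsupp
  have hle_n : ∀ i ∈ f.support, i ≤ n := fun i hi => f.support.le_max' i hi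
  have hn : n ∈ f.support := f.support.max'_mem hsupp
  refine Finsupp.mem_support_iff.mp hn (h.separating n (f n) (hf n) fun x hx => ?_)
  have hdeg : rightContraction p x (∑ i ∈ f.support, f i) ∈ ℬ 0 := by
    rw [map_sum]
    exact sum_mem fun i hi => h.rightContraction_mem_zero (hle_n i hi) hx (hf i)
  have hcontract : rightContraction p x (∑ i ∈ f.support, f i) = 0 :=
    Submodule.disjoint_def.mp hN_zero _ (hN x ha) hdeg
  calc p x (f n) = p x (∑ i ∈ f.support, f i) := by
        rw [map_sum, Finset.sum_eq_single_of_mem n hn fun i hi hin =>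
          h.apply_eq_zero_of_lt (lt_of_le_of_ne (hle_n i hi) hin) x hx _ (hf i)]
    _ = 0 := by rw [← counit_rightContraction p, hcontract, map_zero]

end IsGradedSeparatingPairing

end GradedPairing

theorem IsDualPair.isGradedSeparatingPairing {k Hm Hp : Type*} [CommRing k] [Ring Hm] [Ring Hp]
    [HopfAlgebra k Hm] [HopfAlgebra k Hp] {ℬm : ℕ → Submodule k Hm} {ℬp : ℕ → Submodule k Hp}
    {p : Hm →ₗ[k] Hp →ₗ[k] k} (hD : IsDualPair k Hm Hp ℬm ℬp p) :
    IsGradedSeparatingPairing ℬm ℬp p where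
  iSup_eq_top := hD.gradedP.internal.submodule_iSup_eq_top
  comul_mem := hD.gradedP.comul_mem
  apply_eq_zero_of_lt hmn := hD.orth hmn.ne'
  separating n a ha hpair := by
    have := hD.gradedP.free n
    suffices h : (⟨a, ha⟩ : ℬp n) = 0 from congrArg Subtype.val h
    refine (Module.forall_dual_apply_eq_zero_iff k _).mp fun φ => ?_
    obtain ⟨x, rfl⟩ := (hD.perfect n).surjective φ
    exact hpair x x.2

theorem apply_apply_vacuum_eq_rightContraction {k D C V : Type*} [CommSemiring k]
    [AddCommMonoid D] [Module k D] [Coalgebra k D] [AddCommMonoid C] [Module k C] [Coalgebra k C]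
    [AddCommMonoid V] [Module k V] {p : D →ₗ[k] C →ₗ[k] k}
    {π : C →ₗ[k] Module.End k V} {τ : D → Module.End k V}
    (hrel : ∀ (x : D) (a : C) (N : ℕ) (x1 x2 : Fin N → D),
      Coalgebra.comul (R := k) x = ∑ i, x1 i ⊗ₜ[k] x2 i →
      τ x * π a = ∑ i, π (rightContraction p (x1 i) a) * τ (x2 i))
    {v₀ : V} (hvac : ∀ x : D, τ x v₀ = Coalgebra.counit (R := k) x • v₀) (x : D) (a : C) :
    τ x (π a v₀) = π (rightContraction p x a) v₀ := by
  obtain ⟨N, x1, x2, hx⟩ := TensorProduct.exists_sum_tmul_eq (Coalgebra.comul (R := k) x)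
  have hcounit : ∑ i, Coalgebra.counit (R := k) (x2 i) • x1 i = x := by
    simpa [hx] using congrArg (TensorProduct.rid k D) (Coalgebra.lTensor_counit_comul (R := k) x)
  calc τ x (π a v₀)
      = ∑ i, π (rightContraction p (x1 i) a) (τ (x2 i) v₀) := by
        simpa using LinearMap.congr_fun (hrel x a N x1 x2 hx) v₀
    _ = π (rightContraction p (∑ i, Coalgebra.counit (R := k) (x2 i) • x1 i) a) v₀ := by
        simp only [hvac, map_sum, map_smul, LinearMap.sum_apply, LinearMap.smul_apply]
    _ = π (rightContraction p x a) v₀ := by rw [hcounit]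

theorem injOn_one_apply_of_injective_smul {k A V : Type*} [CommSemiring k] [Semiring A]
    [Algebra k A] [AddCommMonoid V] [Module k V] (π : A →ₐ[k] Module.End k V) {v₀ : V}
    (hinj : Function.Injective (fun c : k => c • v₀)) :
    Set.InjOn (fun a : A => π a v₀) ((1 : Submodule k A) : Set A) := by
  intro a ha b hb hab
  obtain ⟨r, rfl⟩ := Submodule.mem_one.mp ha
  obtain ⟨s, rfl⟩ := Submodule.mem_one.mp hb
  simp only [AlgHom.commutes, Module.algebraMap_end_apply] at hab
  rw [hinj hab]

theorem stone_von_neumann_general {k D C V : Type*} [CommRing k]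
    [AddCommMonoid D] [Module k D] [Coalgebra k D] [AddCommGroup C] [Module k C] [Coalgebra k C]
    [AddCommGroup V] [Module k V] {𝒜 : ℕ → Submodule k D} {ℬ : ℕ → Submodule k C}
    {p : D →ₗ[k] C →ₗ[k] k} (hp : IsGradedSeparatingPairing 𝒜 ℬ p)
    (π : C →ₗ[k] Module.End k V) (τ : D → Module.End k V)
    (hrel : ∀ (x : D) (a : C) (N : ℕ) (x1 x2 : Fin N → D),
      Coalgebra.comul (R := k) x = ∑ i, x1 i ⊗ₜ[k] x2 i →
      τ x * π a = ∑ i, π (rightContraction p (x1 i) a) * τ (x2 i))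
    {v₀ : V} (hvac : ∀ x : D, τ x v₀ = Coalgebra.counit (R := k) x • v₀)
    (hinj : Set.InjOn (fun a : C => π a v₀) (ℬ 0))
    (hspan : Submodule.span k (Set.range (fun a : C => π a v₀)) = ⊤) :
    Function.Bijective (fun a : C => π a v₀) := by
  change Function.Bijective (π.flip v₀)
  constructor
  · have hstable : ∀ x, LinearMap.ker (π.flip v₀) ≤
        (LinearMap.ker (π.flip v₀)).comap (rightContraction p x) := fun x a ha => by
      have hzero : π a v₀ = 0 := ha
      change π (rightContraction p x a) v₀ = 0
      rw [← apply_apply_vacuum_eq_rightContraction hrel hvac, hzero, map_zero]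
    have hdisjoint : Disjoint (ℬ 0) (LinearMap.ker (π.flip v₀)) :=
      LinearMap.disjoint_ker_iff_injOn.mpr hinj
    exact LinearMap.ker_eq_bot.mp (hp.eq_bot_of_invariant hstable hdisjoint.symm)
  · have hrange : LinearMap.range (π.flip v₀) = ⊤ := by
      rw [← hspan, ← Submodule.span_eq (LinearMap.range (π.flip v₀)), LinearMap.coe_range]
      rfl
    exact LinearMap.range_eq_top.mp hrange

/-- generalized Stone–von Neumann theorem: let `(H⁺, H⁻)` be a dual pair and
let `V` be a `k`-module with algebra homomorphisms `π : H⁺ → End(V)`, `τ : H⁻ → End(V)`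
satisfying the Heisenberg-double relation
`τ(x) ∘ π(a) = Σ_{(x)} π(ρ*_{x₍₁₎}(a)) ∘ τ(x₍₂₎)`.  If `v₀ ∈ V` is a lowest weight vacuum
vector (`τ(x)v₀ = ε(x)v₀`, `c ↦ c·v₀` injective, `V` spanned by `π(H⁺)v₀`), then
`a ↦ π(a)v₀` is a `k`-module isomorphism `H⁺ ≅ V`. -/
theorem stone_von_neumann {k : Type*} [CommRing k] {Hm Hp : Type*} [Ring Hm] [Ring Hp]
    [HopfAlgebra k Hm] [HopfAlgebra k Hp]
    {ℬm : ℕ → Submodule k Hm} {ℬp : ℕ → Submodule k Hp}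
    (p : Hm →ₗ[k] Hp →ₗ[k] k) (hD : IsDualPair k Hm Hp ℬm ℬp p)
    (V : Type*) [AddCommGroup V] [Module k V]
    (π : Hp →ₐ[k] Module.End k V) (τ : Hm →ₐ[k] Module.End k V)
    (hrel : ∀ (x : Hm) (a : Hp) (N : ℕ) (x1 x2 : Fin N → Hm),
      Coalgebra.comul (R := k) x = ∑ i, x1 i ⊗ₜ[k] x2 i →
      τ x * π a = ∑ i, π (rhoStar p (x1 i) a) * τ (x2 i))
    (v₀ : V)
    (hvac : ∀ x : Hm, τ x v₀ = Coalgebra.counit (R := k) x • v₀)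
    (hinj : Function.Injective (fun c : k => c • v₀))
    (hspan : Submodule.span k (Set.range (fun a : Hp => π a v₀)) = ⊤) :
    Function.Bijective (fun a : Hp => π a v₀) := by
  simp only [rhoStar_eq_rightContraction] at hrel
  exact stone_von_neumann_general hD.isGradedSeparatingPairing π.toLinearMap τ hrel hvac
    (hD.gradedP.zero_eq ▸ injOn_one_apply_of_injective_smul π hinj) hspan
end

section
/- (Faithfulness of the Fock space representation of the Heisenberg double.) Suppose (H⁺, H⁻) is a dual pair of graded connected Hopf algebras over k. Then the k-linear map H⁺ ⊗_k H⁻ → End_k(H⁺) determined by a ⊗ x ↦ (b ↦ a · ρ*_x(b)) is injective. -/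
open scoped TensorProduct

/-!
An element `z = ∑ aᵢ ⊗ xᵢ` of `H ⊗ M` contracts to the operator `φ(b) = ∑ ⟨xᵢ, b⟩ aᵢ`, and it acts
on the Fock space by `b ↦ ∑ φ(b₍₂₎) b₍₁₎`. Modulo `H ⊗ (H₀ + ⋯ + Hₙ₋₁)`, connectedness gives
`Δ b = 1 ⊗ b` for `b ∈ Hₙ`; so if the action of `z` vanishes, then by induction on the degree `φ`
vanishes as well. Reading `φ = 0` in a basis of `H`, the coordinates of `z`, which lie in `M`, pair
to zero with all of `H`, hence are zero.
-/

section FockSpace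

variable {k : Type*} [CommSemiring k]

section Pairing

variable {M N P : Type*} [AddCommMonoid M] [Module k M] [AddCommMonoid N] [Module k N]
  [AddCommMonoid P] [Module k P]

/-- The contraction `P ⊗ M → Hom(N, P)` along a pairing of `M` with `N`, sending `a ⊗ x` to
`b ↦ ⟨x, b⟩ a`. -/
noncomputable def contract (p : M →ₗ[k] N →ₗ[k] k) : P ⊗[k] M →ₗ[k] N →ₗ[k] P :=
  TensorProduct.lift (LinearMap.smulRightₗ ∘ₗ p).flip

@[simp]
theorem contract_tmul (p : M →ₗ[k] N →ₗ[k] k) (a : P) (x : M) (b : N) :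
    contract p (a ⊗ₜ[k] x) b = p x b • a := by
  simp [contract]

theorem repr_contract {ι : Type*} [DecidableEq ι] (e : Module.Basis ι k P)
    (p : M →ₗ[k] N →ₗ[k] k) (z : P ⊗[k] M) (b : N) (i : ι) :
    e.repr (contract p z b) i = p (TensorProduct.equivFinsuppOfBasisLeft e z i) b := by
  induction z with
  | zero => simp
  | tmul a x => simp [mul_comm]
  | add z w hz hw => simp [hz, hw]

theorem contract_injective [Module.Free k P] {p : M →ₗ[k] N →ₗ[k] k}
    (hp : Function.Injective p) : Function.Injective (contract (P := P) p) := by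
  classical
  let e := Module.Free.chooseBasis k P
  intro z w hzw
  apply (TensorProduct.equivFinsuppOfBasisLeft e).injective
  ext i
  apply hp
  ext b
  rw [← repr_contract, ← repr_contract, hzw]

theorem injective_of_graded_injective {ι : Type*} [DecidableEq ι] {𝒜 : ι → Submodule k M}
    {ℬ : ι → Submodule k N} {p : M →ₗ[k] N →ₗ[k] P} (h𝒜 : DirectSum.IsInternal 𝒜)
    (horth : ∀ {i j}, i ≠ j → ∀ x ∈ 𝒜 i, ∀ b ∈ ℬ j, p x b = 0)
    (hinj : ∀ i, Function.Injective ((p.domRestrict (𝒜 i)).compl₂ (ℬ i).subtype)) :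
    Function.Injective p := by
  have pairing_component (f : DirectSum ι fun i => 𝒜 i) (j : ι) (b : ℬ j) :
      p (DirectSum.coeLinearMap 𝒜 f) b = p (f j) b := by
    induction f using DirectSum.induction_on with
    | zero => simp
    | of i x =>
      rw [DirectSum.coeLinearMap_of]
      obtain rfl | hij := eq_or_ne i j
      · rw [DirectSum.of_eq_same]
      · rw [DirectSum.of_eq_of_ne _ _ _ hij.symm, horth hij x x.2 b b.2]
        simp
    | add f g hf hg => simp [hf, hg]
  intro y y' hyy'
  obtain ⟨f, rfl⟩ := h𝒜.surjective y
  obtain ⟨f', rfl⟩ := h𝒜.surjective y'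
  congr 1
  ext1 j
  apply hinj j
  ext b
  have hb := LinearMap.congr_fun hyy' (b : N)
  exact (pairing_component f j b).symm.trans (hb.trans (pairing_component f' j b))

end Pairing

section ConnectedGrading

/-- A connected grading of a bialgebra `H`, as far as its coalgebra structure is concerned:
submodules `Hₙ` spanning `H` with `Δ(Hₙ) ⊆ ∑ⱼ Hⱼ ⊗ Hₙ₋ⱼ`, `H₀ ⊆ k·1` and `ε(Hₙ) = 0` for
`n > 0`. -/
structure IsConnectedGrading {H : Type*} [Semiring H] [Bialgebra k H]
    (ℬ : ℕ → Submodule k H) : Prop where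
  iSup_eq_top : ⨆ n, ℬ n = ⊤
  comul_mem : ∀ n, ∀ b ∈ ℬ n, Coalgebra.comul (R := k) b ∈
    ⨆ j ∈ Finset.range (n + 1),
      LinearMap.range (TensorProduct.map (ℬ j).subtype (ℬ (n - j)).subtype)
  zero_le_one : ℬ 0 ≤ 1
  counit_eq_zero : ∀ n, 0 < n → ∀ b ∈ ℬ n, Coalgebra.counit (R := k) b = 0

variable {H N : Type*} [Semiring H] [Bialgebra k H] [AddCommMonoid N] [Module k N]
  {ℬ : ℕ → Submodule k H}

theorem IsConnectedGrading.lTensor_comul (hℬ : IsConnectedGrading ℬ) {n : ℕ} {φ : H →ₗ[k] N}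
    (hφ : ∀ m < n, ∀ b ∈ ℬ m, φ b = 0) {b : H} (hb : b ∈ ℬ n) :
    φ.lTensor H (Coalgebra.comul b) = 1 ⊗ₜ[k] φ b := by
  let oneTmulCounit : H ⊗[k] H →ₗ[k] H ⊗[k] N :=
    TensorProduct.mk k H N 1 ∘ₗ φ ∘ₗ (TensorProduct.lid k H).toLinearMap ∘ₗ
      Coalgebra.counit.rTensor H
  suffices h : ⨆ j ∈ Finset.range (n + 1),
      LinearMap.range (TensorProduct.map (ℬ j).subtype (ℬ (n - j)).subtype) ≤
        LinearMap.eqLocus (φ.lTensor H) oneTmulCounit by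
    simpa [oneTmulCounit] using h (hℬ.comul_mem n b hb)
  refine iSup₂_le fun j hj => ?_
  rw [LinearMap.range_le_iff_comap, Submodule.eq_top_iff']
  intro z
  rw [Submodule.mem_comap, LinearMap.mem_eqLocus]
  induction z with
  | zero => simp
  | add z w hz hw => simp only [map_add, hz, hw]
  | tmul u v =>
    obtain rfl | hj0 := Nat.eq_zero_or_pos j
    · obtain ⟨c, hc⟩ := Submodule.mem_one.1 (hℬ.zero_le_one u.2)
      simp [oneTmulCounit, ← hc, Algebra.algebraMap_eq_smul_one, TensorProduct.smul_tmul]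
    · have hu := hℬ.counit_eq_zero j hj0 u u.2
      have hv := hφ (n - j) (by grind) v v.2
      simp [oneTmulCounit, hu, hv]

/-- The operator `b ↦ ∑ φ(b₍₂₎) b₍₁₎`, the convolution product of `φ` and the identity for the
co-opposite comultiplication. -/
noncomputable def copConvId : (H →ₗ[k] H) →ₗ[k] H →ₗ[k] H :=
  (LinearMap.mul' k H ∘ₗ (TensorProduct.comm k H H).toLinearMap).compRight k ∘ₗ
    LinearMap.lcomp k (H ⊗[k] H) Coalgebra.comul ∘ₗ LinearMap.lTensorHom H

theorem copConvId_apply (φ : H →ₗ[k] H) (b : H) :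
    copConvId φ b =
      LinearMap.mul' k H (TensorProduct.comm k H H (φ.lTensor H (Coalgebra.comul b))) :=
  rfl

theorem IsConnectedGrading.eq_zero_of_copConvId_eq_zero (hℬ : IsConnectedGrading ℬ)
    {φ : H →ₗ[k] H} (h : copConvId φ = 0) : φ = 0 := by
  have vanish (n : ℕ) : ∀ b ∈ ℬ n, φ b = 0 := by
    induction n using Nat.strong_induction_on with
    | _ n ih =>
      intro b hb
      simpa [copConvId_apply, hℬ.lTensor_comul ih hb] using LinearMap.congr_fun h b
  rw [← LinearMap.ker_eq_top, eq_top_iff, ← hℬ.iSup_eq_top]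
  exact iSup_le vanish

/-- The Fock space action `H ⊗ M → End(H)` attached to a pairing of `M` with `H`, sending `a ⊗ x`
to `b ↦ a · ∑ ⟨x, b₍₂₎⟩ b₍₁₎`. -/
noncomputable def fockAction {M : Type*} [AddCommMonoid M] [Module k M]
    (p : M →ₗ[k] H →ₗ[k] k) : H ⊗[k] M →ₗ[k] H →ₗ[k] H :=
  copConvId ∘ₗ contract p

end ConnectedGrading

end FockSpace

theorem fockAction_tmul {k Hm Hp : Type*} [CommRing k] [Ring Hm] [Ring Hp] [Bialgebra k Hm]
    [Bialgebra k Hp] (p : Hm →ₗ[k] Hp →ₗ[k] k) (a : Hp) (x : Hm) (b : Hp) :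
    fockAction p (a ⊗ₜ[k] x) b = a * rhoStar p x b := by
  simp only [fockAction, LinearMap.comp_apply, copConvId_apply, rhoStar]
  induction Coalgebra.comul (R := k) b with
  | zero => simp
  | tmul u v => simp
  | add s t hs ht => simp only [map_add, mul_add, hs, ht]

theorem GradedConnected.isConnectedGrading {k H : Type*} [CommRing k] [Ring H] [HopfAlgebra k H]
    {ℬ : ℕ → Submodule k H} (hℬ : GradedConnected k H ℬ) : IsConnectedGrading ℬ where
  iSup_eq_top := hℬ.internal.submodule_iSup_eq_top
  comul_mem := hℬ.comul_mem
  zero_le_one := hℬ.zero_eq.le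
  counit_eq_zero := hℬ.counit_eq_zero

theorem GradedConnected.module_free {k H : Type*} [CommRing k] [Ring H] [HopfAlgebra k H]
    {ℬ : ℕ → Submodule k H} (hℬ : GradedConnected k H ℬ) : Module.Free k H :=
  have := hℬ.free
  Module.Free.of_equiv (LinearEquiv.ofBijective (DirectSum.coeLinearMap ℬ) hℬ.internal)

theorem IsDualPair.pairing_injective {k Hm Hp : Type*} [CommRing k] [Ring Hm] [Ring Hp]
    [HopfAlgebra k Hm] [HopfAlgebra k Hp] {ℬm : ℕ → Submodule k Hm} {ℬp : ℕ → Submodule k Hp}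
    {p : Hm →ₗ[k] Hp →ₗ[k] k} (hD : IsDualPair k Hm Hp ℬm ℬp p) : Function.Injective p :=
  injective_of_graded_injective hD.gradedM.internal hD.orth fun n => (hD.perfect n).injective

theorem fockSpace_faithful_general {k M H : Type*} [CommRing k] [AddCommGroup M] [Module k M]
    [Ring H] [Bialgebra k H] [Module.Free k H] {ℬ : ℕ → Submodule k H}
    (hℬ : IsConnectedGrading ℬ) {p : M →ₗ[k] H →ₗ[k] k} (hp : Function.Injective p) :
    Function.Injective (fockAction p) := by
  refine (injective_iff_map_eq_zero _).2 fun z hz => ?_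
  have contract_eq_zero : contract p z = 0 := hℬ.eq_zero_of_copConvId_eq_zero hz
  exact contract_injective hp (contract_eq_zero.trans (map_zero _).symm)

/-- faithfulness of the Fock space representation of the Heisenberg double:
in a dual pair, the `k`-linear map `H⁺ ⊗ H⁻ → End(H⁺)`, `a ⊗ x ↦ (b ↦ a·ρ*_x(b))`, is
injective.  Equivalently (as stated here): any element `Σᵢ aᵢ ⊗ xᵢ` of `H⁺ ⊗ H⁻` all of
whose actions `b ↦ Σᵢ aᵢ·ρ*_{xᵢ}(b)` vanish is itself zero. -/
theorem fockSpace_faithful {k : Type*} [CommRing k] {Hm Hp : Type*} [Ring Hm] [Ring Hp]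
    [HopfAlgebra k Hm] [HopfAlgebra k Hp]
    {ℬm : ℕ → Submodule k Hm} {ℬp : ℕ → Submodule k Hp}
    (p : Hm →ₗ[k] Hp →ₗ[k] k) (hD : IsDualPair k Hm Hp ℬm ℬp p)
    (N : ℕ) (a : Fin N → Hp) (x : Fin N → Hm)
    (h : ∀ b : Hp, ∑ i, a i * rhoStar p (x i) b = 0) :
    ∑ i, a i ⊗ₜ[k] x i = (0 : Hp ⊗[k] Hm) := by
  have := hD.gradedP.module_free
  apply fockSpace_faithful_general hD.gradedP.isConnectedGrading hD.pairing_injective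
  ext b
  simpa [fockAction_tmul] using h b
end

section
/- Fix, for each w ∈ S_n, a reduced word of w and let T_w ∈ B_n be the corresponding product of generators. Then the family {T_w : w ∈ S_n} is a basis of B_n as an F-vector space; in particular, dim_F B_n = n!. -/
open scoped TensorProduct

namespace HeckeLikeTower

variable (F : Type*) [Field F]

/-- The defining relations of the Hecke-like algebra of degree `n` over `F` with parameters
`c, d`.  The generators `T_1, …, T_{n-1}` are indexed by `Fin (n-1)`, where the index
`i : Fin (n-1)` corresponds to the generator `T_{i+1}`. -/
inductive Rel (c d : F) (n : ℕ) :
    FreeAlgebra F (Fin (n - 1)) → FreeAlgebra F (Fin (n - 1)) → Prop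
  | comm (i j : Fin (n - 1)) (h : (i : ℕ) + 1 < (j : ℕ)) :
      Rel c d n (FreeAlgebra.ι F i * FreeAlgebra.ι F j)
        (FreeAlgebra.ι F j * FreeAlgebra.ι F i)
  | braid (i j : Fin (n - 1)) (h : (j : ℕ) = (i : ℕ) + 1) :
      Rel c d n (FreeAlgebra.ι F i * FreeAlgebra.ι F j * FreeAlgebra.ι F i)
        (FreeAlgebra.ι F j * FreeAlgebra.ι F i * FreeAlgebra.ι F j)
  | quad (i : Fin (n - 1)) :
      Rel c d n (FreeAlgebra.ι F i * FreeAlgebra.ι F i)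
        (c • FreeAlgebra.ι F i + algebraMap F (FreeAlgebra F (Fin (n - 1))) d)

/-- The Hecke-like algebra `B_n` of degree `n` over `F` with parameters `c, d`: the quotient
of the free associative unital `F`-algebra on `T_1, …, T_{n-1}` by the two-sided ideal
generated by the relations. -/
abbrev B (c d : F) (n : ℕ) : Type _ := RingQuot (Rel F c d n)

/-- The generator `T_{i+1}` of the Hecke-like algebra `B_n` (for `i : Fin (n-1)`). -/
def T (c d : F) (n : ℕ) (i : Fin (n - 1)) : B F c d n :=
  RingQuot.mkAlgHom F (Rel F c d n) (FreeAlgebra.ι F i)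

/-- The adjacent transposition `s_{i+1} = (i+1, i+2) ∈ S_n` (for `i : Fin (n-1)`), acting on
`Fin n` by swapping `i` and `i+1` (`0`-based). -/
def s (n : ℕ) (i : Fin (n - 1)) : Equiv.Perm (Fin n) :=
  Equiv.swap ⟨(i : ℕ), lt_of_lt_of_le i.isLt (Nat.sub_le n 1)⟩
    ⟨(i : ℕ) + 1, by have := i.isLt; omega⟩

/-- The product in `S_n` of the adjacent transpositions along a word. -/
def wordProd (n : ℕ) (l : List (Fin (n - 1))) : Equiv.Perm (Fin n) :=
  (l.map (s n)).prod

/-- The product `T_{i_1} ⋯ T_{i_r}` in `B_n` along a word `(i_1, …, i_r)`. -/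
def Tword (c d : F) (n : ℕ) (l : List (Fin (n - 1))) : B F c d n :=
  (l.map (T F c d n)).prod

/-- `l` is a reduced word for the permutation `w ∈ S_n`: the corresponding product of
adjacent transpositions is `w`, and `l` has minimal length among all such words (its length
is then the Coxeter length `ℓ(w)`). -/
def IsReducedWord (n : ℕ) (w : Equiv.Perm (Fin n)) (l : List (Fin (n - 1))) : Prop :=
  wordProd n l = w ∧
    ∀ l' : List (Fin (n - 1)), wordProd n l' = w → l.length ≤ l'.length

/-- The Coxeter length `ℓ(w)` of `w ∈ S_n` with respect to the adjacent transpositions. -/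
noncomputable def len (n : ℕ) (w : Equiv.Perm (Fin n)) : ℕ :=
  sInf {r | ∃ l : List (Fin (n - 1)), wordProd n l = w ∧ l.length = r}

end HeckeLikeTower

open HeckeLikeTower

/-!
Left multiplication by `T_i` is governed by left descents: if `i` is not a descent of `w`, then
`T_i T_w = T_{s_i w}`, and otherwise `T_i T_w = c T_w + d T_{s_i w}`. Both formulas rest on
Matsumoto's theorem, that `T_w` does not depend on the reduced word, and they make the span of the
`T_w` a left ideal containing `1`. Conversely, the same formulas define operators on the free
module with basis `S_n`; these satisfy the defining relations, and in the resulting action of `B_n`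
the element `T_w` sends the basis vector of `1` to that of `w`, so the `T_w` are independent.
-/

namespace HeckeLikeTower

section Transpositions

variable {n : ℕ} {i j : Fin (n - 1)}

/-- The smaller of the two points exchanged by `s n i`. -/
def lo (i : Fin (n - 1)) : Fin n := ⟨i, by omega⟩

/-- The larger of the two points exchanged by `s n i`. -/
def hi (i : Fin (n - 1)) : Fin n := ⟨i + 1, by omega⟩

theorem lo_lt_hi (i : Fin (n - 1)) : lo i < hi i := Nat.lt_succ_self _

theorem hi_eq_lo (h : (j : ℕ) = i + 1) : hi i = lo j := Fin.ext h.symm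

theorem s_apply_lo (i : Fin (n - 1)) : s n i (lo i) = hi i := Equiv.swap_apply_left _ _

theorem s_apply_hi (i : Fin (n - 1)) : s n i (hi i) = lo i := Equiv.swap_apply_right _ _

theorem s_apply_of_ne {x : Fin n} (hlo : x ≠ lo i) (hhi : x ≠ hi i) : s n i x = x :=
  Equiv.swap_apply_of_ne_of_ne hlo hhi

theorem s_apply_s_apply (i : Fin (n - 1)) (x : Fin n) : s n i (s n i x) = x :=
  Equiv.swap_apply_self _ _ x

theorem s_mul_s_mul (i : Fin (n - 1)) (w : Equiv.Perm (Fin n)) : s n i * (s n i * w) = w :=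
  Equiv.swap_mul_self_mul _ _ w

theorem s_apply_lt_s_apply {a b : Fin n} (hab : a < b) (hne : (a, b) ≠ (lo i, hi i)) :
    s n i a < s n i b := by
  simp only [ne_eq, Prod.mk.injEq, lo, hi, Fin.ext_iff] at hne
  simp only [s, Equiv.swap_apply_def, Fin.ext_iff, Fin.lt_def, apply_ite Fin.val] at hab ⊢
  split_ifs <;> omega

theorem s_apply_lt_s_apply_and_ne_iff {a b : Fin n} :
    s n i a < s n i b ∧ (s n i a, s n i b) ≠ (lo i, hi i) ↔ a < b ∧ (a, b) ≠ (lo i, hi i) := by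
  have himp {a b : Fin n} (h : a < b ∧ (a, b) ≠ (lo i, hi i)) :
      s n i a < s n i b ∧ (s n i a, s n i b) ≠ (lo i, hi i) := by
    refine ⟨s_apply_lt_s_apply h.1 h.2, fun heq ↦ ?_⟩
    obtain ⟨ha, hb⟩ := Prod.mk.inj heq
    rw [← s_apply_s_apply i a, ← s_apply_s_apply i b, ha, hb, s_apply_lo, s_apply_hi] at h
    exact h.1.not_gt (lo_lt_hi i)
  exact ⟨fun h ↦ by simpa only [s_apply_s_apply] using himp h, himp⟩

end Transpositions

section BraidFamily

variable {n : ℕ} {M : Type*} [Monoid M] {f : Fin (n - 1) → M} {i j : Fin (n - 1)}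

/-- A family in a monoid satisfying the braid relations of type `A`. -/
structure IsBraidFamily (f : Fin (n - 1) → M) : Prop where
  comm {i j : Fin (n - 1)} (h : (i : ℕ) + 1 < j) : f i * f j = f j * f i
  braid {i j : Fin (n - 1)} (h : (j : ℕ) = i + 1) : f i * f j * f i = f j * f i * f j

theorem IsBraidFamily.mul_mul_comm (hf : IsBraidFamily f) (h : (i : ℕ) + 1 < j) (x : M) :
    f i * (f j * x) = f j * (f i * x) := by
  simp only [← mul_assoc, hf.comm h]

theorem IsBraidFamily.mul_mul_mul_braid (hf : IsBraidFamily f) (h : (j : ℕ) = i + 1) (x : M) :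
    f i * (f j * (f i * x)) = f j * (f i * (f j * x)) := by
  simp only [← mul_assoc, hf.braid h]

theorem isBraidFamily_s (n : ℕ) : IsBraidFamily (s n) where
  comm {i j} h := by
    refine (Equiv.Perm.disjoint_swap_swap ?_).commute
    simp only [List.nodup_cons, List.mem_cons, Fin.mk.injEq]
    grind
  braid {i j} h := by
    have hij : hi i = lo j := hi_eq_lo h
    have hlt : lo i < lo j := hij ▸ lo_lt_hi i
    have hlt' : lo j < hi j := lo_lt_hi j
    have hsi : s n i = Equiv.swap (lo i) (lo j) := congrArg (Equiv.swap (lo i)) hij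
    have hsj : s n j = Equiv.swap (lo j) (hi j) := rfl
    calc s n i * s n j * s n i
        = Equiv.swap (lo j) (lo i) * Equiv.swap (hi j) (lo j) * Equiv.swap (lo j) (lo i) := by
          rw [hsi, hsj, Equiv.swap_comm (lo i), Equiv.swap_comm (hi j)]
      _ = Equiv.swap (lo i) (hi j) := Equiv.swap_mul_swap_mul_swap hlt'.ne' (hlt.trans hlt').ne'
      _ = Equiv.swap (hi j) (lo i) := Equiv.swap_comm _ _
      _ = Equiv.swap (lo j) (hi j) * Equiv.swap (lo i) (lo j) * Equiv.swap (lo j) (hi j) :=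
          (Equiv.swap_mul_swap_mul_swap hlt.ne (hlt.trans hlt').ne).symm
      _ = s n j * s n i * s n j := by rw [hsi, hsj]

end BraidFamily

section Descents

variable {n : ℕ} {i j : Fin (n - 1)} {w : Equiv.Perm (Fin n)}

/-- `w` inverts the values `a` and `b` if `b` occurs before `a` in the one-line notation of `w`. -/
def Inverts (w : Equiv.Perm (Fin n)) (a b : Fin n) : Prop := w⁻¹ b < w⁻¹ a

/-- `i` is a left descent of `w`, that is, `s n i * w` is shorter than `w`. -/
def IsDescent (i : Fin (n - 1)) (w : Equiv.Perm (Fin n)) : Prop := Inverts w (lo i) (hi i)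

theorem inverts_s_mul {a b : Fin n} :
    Inverts (s n i * w) a b ↔ Inverts w (s n i a) (s n i b) := by
  simp only [Inverts, mul_inv_rev, Equiv.Perm.mul_apply, s, Equiv.swap_inv]

theorem not_inverts {a b : Fin n} (h : a ≠ b) : ¬ Inverts w a b ↔ Inverts w b a :=
  not_lt.trans (Ne.le_iff_lt (w⁻¹.injective.ne h))

theorem Inverts.trans {a b c : Fin n} (hab : Inverts w a b) (hbc : Inverts w b c) :
    Inverts w a c :=
  lt_trans hbc hab

theorem isDescent_s_mul_self : IsDescent i (s n i * w) ↔ ¬ IsDescent i w := by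
  rw [IsDescent, IsDescent, not_inverts (lo_lt_hi i).ne, inverts_s_mul, s_apply_lo, s_apply_hi]

theorem isDescent_s_mul_of_far (h : (i : ℕ) + 1 < j ∨ (j : ℕ) + 1 < i) :
    IsDescent j (s n i * w) ↔ IsDescent j w := by
  rw [IsDescent, IsDescent, inverts_s_mul, s_apply_of_ne, s_apply_of_ne] <;>
    simp only [ne_eq, lo, hi, Fin.ext_iff] <;> omega

theorem inverts_s_mul_lo_hi (h : (j : ℕ) = i + 1) :
    Inverts (s n i * w) (lo i) (hi j) ↔ IsDescent j w := by
  rw [IsDescent, inverts_s_mul, s_apply_lo, hi_eq_lo h, s_apply_of_ne] <;>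
    simp only [ne_eq, lo, hi, Fin.ext_iff] <;> omega

theorem inverts_s_succ_mul_lo_hi (h : (j : ℕ) = i + 1) :
    Inverts (s n j * w) (lo i) (hi j) ↔ IsDescent i w := by
  rw [IsDescent, inverts_s_mul, s_apply_hi, hi_eq_lo h, s_apply_of_ne] <;>
    simp only [ne_eq, lo, hi, Fin.ext_iff] <;> omega

theorem isDescent_succ_s_mul (h : (j : ℕ) = i + 1) :
    IsDescent j (s n i * w) ↔ Inverts w (lo i) (hi j) := by
  rw [← inverts_s_mul_lo_hi h, s_mul_s_mul]

theorem isDescent_s_succ_mul (h : (j : ℕ) = i + 1) :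
    IsDescent i (s n j * w) ↔ Inverts w (lo i) (hi j) := by
  rw [← inverts_s_succ_mul_lo_hi h, s_mul_s_mul]

theorem IsDescent.inverts_of_succ (hdi : IsDescent i w) (hdj : IsDescent j w)
    (h : (j : ℕ) = i + 1) : Inverts w (lo i) (hi j) := by
  rw [IsDescent, hi_eq_lo h] at hdi
  exact hdi.trans hdj

theorem Inverts.isDescent_or_isDescent (hinv : Inverts w (lo i) (hi j)) (h : (j : ℕ) = i + 1) :
    IsDescent i w ∨ IsDescent j w := by
  by_contra! hnot
  rw [IsDescent, IsDescent, not_inverts (lo_lt_hi i).ne, not_inverts (lo_lt_hi j).ne,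
    hi_eq_lo h] at hnot
  exact lt_asymm hinv (hnot.2.trans hnot.1)

theorem eq_one_of_forall_not_isDescent (h : ∀ i, ¬ IsDescent i w) : w = 1 := by
  cases n with
  | zero => exact Subsingleton.elim _ _
  | succ m =>
    have hmono : StrictMono ⇑w⁻¹ := Fin.strictMono_iff_lt_succ.2 fun i ↦
      (not_inverts (lo_lt_hi (n := m + 1) i).ne).1 (h i)
    have hid : ⇑w⁻¹ = id := (hmono.range_inj strictMono_id).1
      ((w⁻¹).surjective.range_eq.trans Set.range_id.symm)
    exact inv_eq_one.1 (Equiv.ext (congrFun hid))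

end Descents

section Inversions

variable {n : ℕ} {i : Fin (n - 1)} {w : Equiv.Perm (Fin n)}

open Classical in
/-- The inversions of `w`, recorded as pairs of values. -/
noncomputable def inversions (w : Equiv.Perm (Fin n)) : Finset (Fin n × Fin n) :=
  {p | p.1 < p.2 ∧ Inverts w p.1 p.2}

theorem mem_inversions {a b : Fin n} : (a, b) ∈ inversions w ↔ a < b ∧ Inverts w a b := by
  simp [inversions]

theorem inversions_one : inversions (1 : Equiv.Perm (Fin n)) = ∅ :=
  Finset.eq_empty_of_forall_notMem fun _ hp ↦
    lt_asymm (mem_inversions.1 hp).1 (mem_inversions.1 hp).2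

theorem mem_inversions_lo_hi : (lo i, hi i) ∈ inversions w ↔ IsDescent i w :=
  mem_inversions.trans (and_iff_right (lo_lt_hi i))

theorem inversions_s_mul_erase :
    (inversions (s n i * w)).erase (lo i, hi i) =
      ((inversions w).erase (lo i, hi i)).map ((s n i).prodCongr (s n i)).toEmbedding := by
  ext ⟨a, b⟩
  have hsymm : ((s n i).prodCongr (s n i)).symm (a, b) = (s n i a, s n i b) := by simp [s]
  rw [Finset.mem_map_equiv, hsymm, Finset.mem_erase, Finset.mem_erase, mem_inversions,
    mem_inversions, inverts_s_mul, ← and_assoc, ← and_assoc, and_comm (a := (a, b) ≠ _),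
    and_comm (a := (s n i a, s n i b) ≠ _), s_apply_lt_s_apply_and_ne_iff]

theorem card_inversions_s_mul_of_not_isDescent (h : ¬ IsDescent i w) :
    (inversions (s n i * w)).card = (inversions w).card + 1 := by
  have hmem : (lo i, hi i) ∈ inversions (s n i * w) :=
    mem_inversions_lo_hi.2 (isDescent_s_mul_self.2 h)
  rw [← Finset.card_erase_add_one hmem, inversions_s_mul_erase, Finset.card_map,
    Finset.erase_eq_of_notMem (mem_inversions_lo_hi.not.2 h)]

theorem card_inversions_s_mul_of_isDescent (h : IsDescent i w) :
    (inversions (s n i * w)).card + 1 = (inversions w).card := by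
  rw [← card_inversions_s_mul_of_not_isDescent (isDescent_s_mul_self.not_left.2 h), s_mul_s_mul]

end Inversions

section ReducedWords

variable {n : ℕ} {i : Fin (n - 1)} {w : Equiv.Perm (Fin n)} {l l' : List (Fin (n - 1))}

theorem wordProd_cons (i : Fin (n - 1)) (l : List (Fin (n - 1))) :
    wordProd n (i :: l) = s n i * wordProd n l := by
  rw [wordProd, List.map_cons, List.prod_cons, wordProd]

theorem card_inversions_wordProd_le (l : List (Fin (n - 1))) :
    (inversions (wordProd n l)).card ≤ l.length := by
  induction l with
  | nil => simp [wordProd, inversions_one]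
  | cons i l ih =>
    rw [wordProd_cons, List.length_cons]
    by_cases h : IsDescent i (wordProd n l)
    · have := card_inversions_s_mul_of_isDescent h
      omega
    · have := card_inversions_s_mul_of_not_isDescent h
      omega

theorem exists_wordProd_eq_of_card_inversions (w : Equiv.Perm (Fin n)) :
    ∃ l, wordProd n l = w ∧ l.length = (inversions w).card := by
  induction hk : (inversions w).card generalizing w with
  | zero =>
    have hw : w = 1 := eq_one_of_forall_not_isDescent fun i hi ↦ by
      have := card_inversions_s_mul_of_isDescent hi
      omega
    exact ⟨[], hw.symm, rfl⟩
  | succ k ih =>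
    obtain ⟨i, hi⟩ : ∃ i, IsDescent i w := by
      by_contra! h
      simp [eq_one_of_forall_not_isDescent h, inversions_one] at hk
    have hcard := card_inversions_s_mul_of_isDescent hi
    obtain ⟨l, hl, hlen⟩ := ih (s n i * w) (by omega)
    exact ⟨i :: l, by rw [wordProd_cons, hl, s_mul_s_mul], by rw [List.length_cons, hlen]⟩

theorem isReducedWord_iff :
    IsReducedWord n w l ↔ wordProd n l = w ∧ l.length = (inversions w).card := by
  refine and_congr_right fun hl ↦ ⟨fun hmin ↦ ?_, fun hlen l' hl' ↦ ?_⟩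
  · obtain ⟨l', hl', hlen⟩ := exists_wordProd_eq_of_card_inversions w
    exact ((hmin l' hl').trans_eq hlen).antisymm (hl ▸ card_inversions_wordProd_le l)
  · exact hlen.trans_le (hl' ▸ card_inversions_wordProd_le l')

theorem IsReducedWord.length_eq (hl : IsReducedWord n w l) (hl' : IsReducedWord n w l') :
    l.length = l'.length :=
  (hl.2 l' hl'.1).antisymm (hl'.2 l hl.1)

theorem exists_isReducedWord (w : Equiv.Perm (Fin n)) : ∃ l, IsReducedWord n w l :=
  (exists_wordProd_eq_of_card_inversions w).imp fun _ ↦ isReducedWord_iff.2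

theorem isReducedWord_nil : IsReducedWord n 1 [] :=
  isReducedWord_iff.2 ⟨rfl, by simp [inversions_one]⟩

theorem isReducedWord_cons :
    IsReducedWord n w (i :: l) ↔ IsDescent i w ∧ IsReducedWord n (s n i * w) l := by
  have hprod : wordProd n (i :: l) = w ↔ wordProd n l = s n i * w := by
    rw [wordProd_cons]
    exact ⟨fun h ↦ by rw [← h, s_mul_s_mul], fun h ↦ by rw [h, s_mul_s_mul]⟩
  rw [isReducedWord_iff, isReducedWord_iff, hprod, List.length_cons, and_left_comm]
  refine and_congr_right fun hl ↦ ?_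
  have hle : (inversions (s n i * w)).card ≤ l.length := hl ▸ card_inversions_wordProd_le l
  by_cases h : IsDescent i w
  · have := card_inversions_s_mul_of_isDescent h
    simp only [h, true_and]
    omega
  · have := card_inversions_s_mul_of_not_isDescent h
    simp only [h, false_and, iff_false]
    omega

theorem IsReducedWord.cons_of_not_isDescent (hl : IsReducedWord n w l) (h : ¬ IsDescent i w) :
    IsReducedWord n (s n i * w) (i :: l) :=
  isReducedWord_cons.2 ⟨isDescent_s_mul_self.2 h, by rwa [s_mul_s_mul]⟩

end ReducedWords

section Matsumoto

variable {n : ℕ} {i j : Fin (n - 1)} {w : Equiv.Perm (Fin n)} {l l' : List (Fin (n - 1))}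
variable {M : Type*} [Monoid M] {f : Fin (n - 1) → M}

theorem IsBraidFamily.exists_isReducedWord_cons_of_far (hf : IsBraidFamily f)
    (h : (i : ℕ) + 1 < j) (hdi : IsDescent i w) (hdj : IsDescent j w) :
    ∃ l l', IsReducedWord n w (i :: l) ∧ IsReducedWord n w (j :: l') ∧
      ((i :: l).map f).prod = ((j :: l').map f).prod := by
  obtain ⟨m, hm⟩ := exists_isReducedWord (s n j * (s n i * w))
  refine ⟨j :: m, i :: m, ?_, ?_, ?_⟩
  · simp only [isReducedWord_cons, isDescent_s_mul_of_far (.inl h), hdi, hdj, hm, true_and]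
  · simp only [isReducedWord_cons, isDescent_s_mul_of_far (.inr h), hdi, hdj,
      (isBraidFamily_s n).mul_mul_comm h, hm, true_and]
  · simp only [List.map_cons, List.prod_cons, hf.mul_mul_comm h]

theorem IsBraidFamily.exists_isReducedWord_cons_of_succ (hf : IsBraidFamily f)
    (h : (j : ℕ) = i + 1) (hdi : IsDescent i w) (hdj : IsDescent j w) :
    ∃ l l', IsReducedWord n w (i :: l) ∧ IsReducedWord n w (j :: l') ∧
      ((i :: l).map f).prod = ((j :: l').map f).prod := by
  obtain ⟨m, hm⟩ := exists_isReducedWord (s n i * (s n j * (s n i * w)))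
  have hinv : Inverts w (lo i) (hi j) := hdi.inverts_of_succ hdj h
  refine ⟨j :: i :: m, i :: j :: m, ?_, ?_, ?_⟩
  · simp only [isReducedWord_cons, isDescent_succ_s_mul h, isDescent_s_succ_mul h,
      inverts_s_mul_lo_hi h, hdi, hdj, hinv, hm, true_and]
  · simp only [isReducedWord_cons, isDescent_succ_s_mul h, isDescent_s_succ_mul h,
      inverts_s_succ_mul_lo_hi h, hdi, hdj, hinv, ← (isBraidFamily_s n).mul_mul_mul_braid h, hm,
      true_and]
  · simp only [List.map_cons, List.prod_cons, hf.mul_mul_mul_braid h]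

theorem IsBraidFamily.exists_isReducedWord_cons (hf : IsBraidFamily f)
    (hij : i ≠ j) (hdi : IsDescent i w) (hdj : IsDescent j w) :
    ∃ l l', IsReducedWord n w (i :: l) ∧ IsReducedWord n w (j :: l') ∧
      ((i :: l).map f).prod = ((j :: l').map f).prod := by
  wlog hlt : i < j generalizing i j
  · obtain ⟨l, l', hl, hl', heq⟩ := this hij.symm hdj hdi (hij.lt_or_gt.resolve_left hlt)
    exact ⟨l', l, hl', hl, heq.symm⟩
  rcases (Nat.succ_le_of_lt hlt).eq_or_lt with h | h
  · exact hf.exists_isReducedWord_cons_of_succ h.symm hdi hdj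
  · exact hf.exists_isReducedWord_cons_of_far h hdi hdj

/-- **Matsumoto's theorem** for the symmetric group. -/
theorem IsBraidFamily.prod_map_eq (hf : IsBraidFamily f) (hl : IsReducedWord n w l)
    (hl' : IsReducedWord n w l') : (l.map f).prod = (l'.map f).prod := by
  induction hk : l.length generalizing w l l' with
  | zero =>
    obtain rfl := List.length_eq_zero_iff.1 hk
    obtain rfl := List.length_eq_zero_iff.1 (hl.length_eq hl').symm
    rfl
  | succ k ih =>
    have prod_eq_of_head_eq {i m m'} (hm : IsReducedWord n w (i :: m))
        (hm' : IsReducedWord n w (i :: m')) : ((i :: m).map f).prod = ((i :: m').map f).prod := by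
      have hlen : m.length = k := Nat.succ.inj ((hm.length_eq hl).trans hk)
      rw [List.map_cons, List.prod_cons, List.map_cons, List.prod_cons,
        ih (isReducedWord_cons.1 hm).2 (isReducedWord_cons.1 hm').2 hlen]
    obtain ⟨i, m, rfl⟩ := List.exists_cons_of_length_eq_add_one hk
    obtain ⟨j, m', rfl⟩ := List.exists_cons_of_length_eq_add_one (hl.length_eq hl' ▸ hk)
    obtain rfl | hij := eq_or_ne i j
    · exact prod_eq_of_head_eq hl hl'
    · obtain ⟨p, p', hp, hp', heq⟩ := hf.exists_isReducedWord_cons hij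
        (isReducedWord_cons.1 hl).1 (isReducedWord_cons.1 hl').1
      exact (prod_eq_of_head_eq hl hp).trans (heq.trans (prod_eq_of_head_eq hp' hl'))

end Matsumoto

section HeckeFamily

variable {n : ℕ} {R A : Type*} [CommSemiring R] [Semiring A] [Algebra R A] {c d : R}
  {f : Fin (n - 1) → A}

/-- A family in an algebra satisfying the defining relations of the Hecke-like algebra. -/
structure IsHeckeFamily (c d : R) (f : Fin (n - 1) → A) : Prop extends IsBraidFamily f where
  quad (i : Fin (n - 1)) : f i * f i = c • f i + d • 1

theorem IsHeckeFamily.mul_prod_map_mem_span (hf : IsHeckeFamily c d f)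
    {word : Equiv.Perm (Fin n) → List (Fin (n - 1))} (hword : ∀ w, IsReducedWord n w (word w))
    (i : Fin (n - 1)) (w : Equiv.Perm (Fin n)) :
    f i * ((word w).map f).prod ∈
      Submodule.span R (Set.range fun w ↦ ((word w).map f).prod) := by
  have hmem (w) : ((word w).map f).prod ∈
      Submodule.span R (Set.range fun w ↦ ((word w).map f).prod) :=
    Submodule.subset_span (Set.mem_range_self w)
  by_cases hi : IsDescent i w
  · have hw : ((word w).map f).prod = f i * ((word (s n i * w)).map f).prod :=
      hf.prod_map_eq (hword w) (isReducedWord_cons.2 ⟨hi, hword _⟩)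
    have hmul : f i * ((word w).map f).prod =
        c • ((word w).map f).prod + d • ((word (s n i * w)).map f).prod := by
      rw [hw, ← mul_assoc, hf.quad, add_mul, smul_mul_assoc, smul_mul_assoc, one_mul]
    exact hmul ▸ add_mem (Submodule.smul_mem _ c (hmem w)) (Submodule.smul_mem _ d (hmem _))
  · have hmul : f i * ((word w).map f).prod = ((word (s n i * w)).map f).prod :=
      hf.prod_map_eq ((hword w).cons_of_not_isDescent hi) (hword _)
    exact hmul ▸ hmem _

theorem IsHeckeFamily.adjoin_le_span (hf : IsHeckeFamily c d f)
    {word : Equiv.Perm (Fin n) → List (Fin (n - 1))} (hword : ∀ w, IsReducedWord n w (word w)) :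
    Subalgebra.toSubmodule (Algebra.adjoin R (Set.range f)) ≤
      Submodule.span R (Set.range fun w ↦ ((word w).map f).prod) := by
  rw [Algebra.adjoin_eq_span, Submodule.span_le]
  intro x hx
  induction hx using Submonoid.closure_induction_left with
  | one =>
    have hone : ((word 1).map f).prod = 1 := hf.prod_map_eq (hword 1) isReducedWord_nil
    exact Submodule.subset_span ⟨1, hone⟩
  | mul_left _ hgen y _ hy =>
    obtain ⟨i, rfl⟩ := hgen
    have hle : Submodule.span R (Set.range fun w ↦ ((word w).map f).prod) ≤
        (Submodule.span R (Set.range fun w ↦ ((word w).map f).prod)).comap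
          (LinearMap.mulLeft R (f i)) :=
      Submodule.span_le.2 (Set.range_subset_iff.2 (hf.mul_prod_map_mem_span hword i))
    exact hle hy

end HeckeFamily

section LeftMul

variable {n : ℕ} {R : Type*} [CommSemiring R] {c d : R} {i j : Fin (n - 1)}
  {w : Equiv.Perm (Fin n)}

open Classical in
/-- The operator on the free module with basis `S_n` that models left multiplication by `T_{i+1}`
in the basis `T_w`. -/
noncomputable def leftMul (c d : R) (i : Fin (n - 1)) :
    Module.End R (Equiv.Perm (Fin n) →₀ R) :=
  Finsupp.linearCombination R fun w ↦
    if IsDescent i w then c • .single w 1 + d • .single (s n i * w) 1 else .single (s n i * w) 1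

open Classical in
theorem leftMul_single (c d : R) (i : Fin (n - 1)) (w : Equiv.Perm (Fin n)) :
    leftMul c d i (.single w 1) =
      if IsDescent i w then c • .single w 1 + d • .single (s n i * w) 1
      else .single (s n i * w) 1 := by
  rw [leftMul, Finsupp.linearCombination_single, one_smul]

theorem leftMul_single_of_isDescent (h : IsDescent i w) :
    leftMul c d i (.single w 1) = c • .single w 1 + d • .single (s n i * w) 1 := by
  rw [leftMul_single, if_pos h]

theorem leftMul_single_of_not_isDescent (h : ¬ IsDescent i w) :
    leftMul c d i (.single w 1) = .single (s n i * w) 1 := by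
  rw [leftMul_single, if_neg h]

theorem leftMul_mul_self (c d : R) (i : Fin (n - 1)) :
    leftMul c d i * leftMul c d i = c • leftMul c d i + d • 1 := by
  refine Finsupp.basisSingleOne.ext fun w ↦ ?_
  simp only [Finsupp.coe_basisSingleOne, Module.End.mul_apply, LinearMap.add_apply,
    LinearMap.smul_apply, Module.End.one_apply]
  by_cases h : IsDescent i w
  · have h' : ¬ IsDescent i (s n i * w) := by rwa [isDescent_s_mul_self, not_not]
    simp only [leftMul_single_of_isDescent h, map_add, map_smul,
      leftMul_single_of_not_isDescent h', s_mul_s_mul]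
  · have h' : IsDescent i (s n i * w) := isDescent_s_mul_self.2 h
    simp only [leftMul_single_of_not_isDescent h, leftMul_single_of_isDescent h', s_mul_s_mul]

theorem leftMul_comm (h : (i : ℕ) + 1 < j) :
    leftMul c d i * leftMul c d j = leftMul c d j * leftMul c d i := by
  refine Finsupp.basisSingleOne.ext fun w ↦ ?_
  simp only [Finsupp.coe_basisSingleOne, Module.End.mul_apply]
  by_cases hdi : IsDescent i w <;> by_cases hdj : IsDescent j w <;>
    simp only [leftMul_single, hdi, hdj, isDescent_s_mul_of_far (.inl h),
      isDescent_s_mul_of_far (.inr h), if_true, if_false, map_add, map_smul,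
      (isBraidFamily_s n).mul_mul_comm h]
  module

theorem leftMul_braid (h : (j : ℕ) = i + 1) :
    leftMul c d i * leftMul c d j * leftMul c d i =
      leftMul c d j * leftMul c d i * leftMul c d j := by
  refine Finsupp.basisSingleOne.ext fun w ↦ ?_
  simp only [Finsupp.coe_basisSingleOne, Module.End.mul_apply]
  -- The six consistent cases are the relative orders of the positions of the values `i, i+1, i+2`.
  by_cases hdi : IsDescent i w <;> by_cases hdj : IsDescent j w <;>
    by_cases hinv : Inverts w (lo i) (hi j) <;>
    first
    | exact absurd (hdi.inverts_of_succ hdj h) hinv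
    | exact absurd (hinv.isDescent_or_isDescent h) (not_or.2 ⟨hdi, hdj⟩)
    | simp only [leftMul_single, hdi, hdj, hinv, isDescent_s_mul_self, isDescent_succ_s_mul h,
        isDescent_s_succ_mul h, inverts_s_mul_lo_hi h, inverts_s_succ_mul_lo_hi h, if_true,
        if_false, not_true, not_false_iff, map_add, map_smul, s_mul_s_mul,
        (isBraidFamily_s n).mul_mul_mul_braid h]
      try module

theorem isHeckeFamily_leftMul (n : ℕ) (c d : R) :
    IsHeckeFamily c d (leftMul (n := n) c d) where
  comm := leftMul_comm
  braid := leftMul_braid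
  quad := leftMul_mul_self c d

theorem prod_map_leftMul_single_one {l : List (Fin (n - 1))} (hl : IsReducedWord n w l) :
    (l.map (leftMul c d)).prod (.single 1 1) = .single w 1 := by
  induction l generalizing w with
  | nil =>
    obtain rfl : 1 = w := hl.1
    rfl
  | cons i l ih =>
    obtain ⟨hdi, hl⟩ := isReducedWord_cons.1 hl
    have hndi : ¬ IsDescent i (s n i * w) := by rwa [isDescent_s_mul_self, not_not]
    rw [List.map_cons, List.prod_cons, Module.End.mul_apply, ih hl,
      leftMul_single_of_not_isDescent hndi, s_mul_s_mul]

end LeftMul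

section HeckeAlgebra

variable {n : ℕ} {F A : Type*} [Field F] [Semiring A] [Algebra F A] {c d : F}
  {f : Fin (n - 1) → A}

theorem isHeckeFamily_T (c d : F) (n : ℕ) : IsHeckeFamily c d (T F c d n) where
  comm {i j} h := by
    simpa only [T, map_mul] using RingQuot.mkAlgHom_rel F (Rel.comm (c := c) (d := d) i j h)
  braid {i j} h := by
    simpa only [T, map_mul] using RingQuot.mkAlgHom_rel F (Rel.braid (c := c) (d := d) i j h)
  quad i := by
    simpa only [T, map_mul, map_add, map_smul, map_one, Algebra.algebraMap_eq_smul_one]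
      using RingQuot.mkAlgHom_rel F (Rel.quad (c := c) (d := d) i)

theorem adjoin_range_T (c d : F) (n : ℕ) : Algebra.adjoin F (Set.range (T F c d n)) = ⊤ := by
  have hrange : Set.range (T F c d n) =
      RingQuot.mkAlgHom F (Rel F c d n) '' Set.range (FreeAlgebra.ι F) :=
    Set.range_comp _ _
  rw [hrange, ← AlgHom.map_adjoin, FreeAlgebra.adjoin_range_ι, Algebra.map_top,
    AlgHom.range_eq_top]
  exact RingQuot.mkAlgHom_surjective F _

/-- The algebra homomorphism out of `B_n` that a Hecke family determines by the universal property
of the presentation, sending `T_{i+1}` to `f i`. -/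
noncomputable def IsHeckeFamily.lift (hf : IsHeckeFamily c d f) : B F c d n →ₐ[F] A :=
  RingQuot.liftAlgHom F ⟨FreeAlgebra.lift F f, fun x y hxy ↦ by
    cases hxy with
    | comm i j h => simpa using hf.comm h
    | braid i j h => simpa using hf.braid h
    | quad i => simpa [Algebra.algebraMap_eq_smul_one] using hf.quad i⟩

theorem IsHeckeFamily.lift_T (hf : IsHeckeFamily c d f) (i : Fin (n - 1)) :
    hf.lift (T F c d n i) = f i := by
  rw [IsHeckeFamily.lift, T, RingQuot.liftAlgHom_mkAlgHom_apply, FreeAlgebra.lift_ι_apply]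

theorem span_range_Tword {word : Equiv.Perm (Fin n) → List (Fin (n - 1))}
    (hword : ∀ w, IsReducedWord n w (word w)) :
    Submodule.span F (Set.range fun w ↦ Tword F c d n (word w)) = ⊤ := by
  rw [eq_top_iff, ← Algebra.top_toSubmodule, ← adjoin_range_T]
  exact (isHeckeFamily_T c d n).adjoin_le_span hword

theorem linearIndependent_Tword {word : Equiv.Perm (Fin n) → List (Fin (n - 1))}
    (hword : ∀ w, IsReducedWord n w (word w)) :
    LinearIndependent F fun w ↦ Tword F c d n (word w) := by
  let ρ : B F c d n →ₐ[F] Module.End F (Equiv.Perm (Fin n) →₀ F) :=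
    (isHeckeFamily_leftMul n c d).lift
  have hρ (w) : ρ (Tword F c d n (word w)) (.single 1 1) = .single w 1 := by
    have hT : ⇑ρ ∘ T F c d n = leftMul c d := funext (isHeckeFamily_leftMul n c d).lift_T
    rw [Tword, map_list_prod, List.map_map, hT, prod_map_leftMul_single_one (hword w)]
  refine .of_comp (LinearMap.applyₗ (Finsupp.single 1 1) ∘ₗ ρ.toLinearMap) ?_
  convert Finsupp.linearIndependent_single_one F (Equiv.Perm (Fin n)) using 1
  exact funext hρ

end HeckeAlgebra

end HeckeLikeTower

/-- fixing for each `w ∈ S_n` a reduced word, the family `{T_w : w ∈ S_n}` is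
a basis of the Hecke-like algebra `B_n` as an `F`-vector space (linearly independent and
spanning); in particular `dim_F B_n = n!`. -/
theorem heckeLike_Tw_basis (F : Type*) [Field F] (c d : F) (n : ℕ) (hn : 0 < n)
    (word : Equiv.Perm (Fin n) → List (Fin (n - 1)))
    (hword : ∀ w, IsReducedWord n w (word w)) :
    LinearIndependent F (fun w : Equiv.Perm (Fin n) => Tword F c d n (word w)) ∧
    Submodule.span F (Set.range (fun w : Equiv.Perm (Fin n) => Tword F c d n (word w))) = ⊤ ∧
    Module.finrank F (B F c d n) = Nat.factorial n := by
  have hindep := linearIndependent_Tword (c := c) (d := d) hword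
  have hspan := span_range_Tword (c := c) (d := d) hword
  refine ⟨hindep, hspan, ?_⟩
  rw [Module.finrank_eq_card_basis (Module.Basis.mk hindep hspan.ge), Fintype.card_perm,
    Fintype.card_fin]
end
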